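/- Let G be a compactly generated t.d.l.c. group with modular function Δ, let Γ be a Cayley–Abels graph for G, let α be a vertex of Γ, let B_1, …, B_n be the orbits of the stabilizer G_α on the neighbours of α, and choose g_1, …, g_n ∈ G with α·g_i ∈ B_i for each i. Then the image of Δ equals the subgroup of the positive reals generated by the n rational numbers |(α·g_i)·G_α| / |(α·g_i^{-1})·G_α| for i = 1, …, n (where |β·G_α| is the finite cardinality of the G_α-orbit of β). Moreover, the image of Δ is a finitely generated free abelian group. -/

import Mathlib

open MeasureTheory
open scoped NNReal ENNReal

/-- A Cayley–Abels graph for a topological group `G`. -/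
def IsCayleyAbels {G V : Type*} [Group G] [TopologicalSpace G]
    (Γ : SimpleGraph V) (ρ : G →* Equiv.Perm V) : Prop :=
  Γ.Connected ∧ (∀ v : V, (Γ.neighborSet v).Finite) ∧
    (∀ (g : G) (u v : V), Γ.Adj u v → Γ.Adj (ρ g u) (ρ g v)) ∧
    (∀ u v : V, ∃ g : G, ρ g u = v) ∧
    (∀ v : V, IsCompact {g : G | ρ g v = v} ∧ IsOpen {g : G | ρ g v = v})

/-- The cardinality `|b·G_a|` of the orbit of `b` under the stabilizer of `a`. -/
noncomputable def suborbitCard {G V : Type*} [Group G] (ρ : G →* Equiv.Perm V)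
    (a b : V) : ℕ :=
  Set.ncard ((fun g : G => ρ g b) '' {g : G | ρ g a = a})

/-!
For a compact open subgroup `H`, the Haar measures of `H` and of `g H g⁻¹` are compared through the
common subgroup `H ∩ g H g⁻¹`, and this expresses `Δ g` as a quotient of two indices.  When `H` is
the stabilizer of the vertex `α`, orbit–stabilizer turns these indices into suborbit lengths.
For `g ∈ H` the two subgroups coincide, so `Δ` is trivial on `H`.  As the graph is connected, `G` is
generated by `H` together with elements carrying `α` into each `H`-orbit of neighbours, so the
values of `Δ` at these elements generate its image.  A finitely generated subgroup of the positive
reals is torsion-free, hence free abelian.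
-/

theorem exists_mulEquiv_multiplicative_fin_int (A : Type*) [CommGroup A] [IsMulTorsionFree A]
    [Group.FG A] : ∃ m : ℕ, Nonempty (A ≃* Multiplicative (Fin m → ℤ)) := by
  have : Module.Finite ℤ (Additive A) := Module.Finite.iff_addGroup_fg.2 inferInstance
  exact ⟨_, ⟨(Module.finBasis ℤ (Additive A)).equivFun.toAddEquiv.toMultiplicativeRight⟩⟩

section PermStabilizer

open scoped Pointwise

variable {G V : Type*} [Group G] (ρ : G →* Equiv.Perm V)

/-- The stabilizer in `G` of the point `v`, for an action given as a homomorphism `ρ` to the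
permutation group of `V`; it bundles the set `{g | ρ g v = v}` as a subgroup. -/
def permStabilizer (v : V) : Subgroup G :=
  (MulAction.stabilizer (Equiv.Perm V) v).comap ρ

variable {ρ}

theorem mem_permStabilizer {v : V} {g : G} : g ∈ permStabilizer ρ v ↔ ρ g v = v :=
  Iff.rfl

variable (ρ)

theorem permStabilizer_apply (g : G) (v : V) :
    permStabilizer ρ (ρ g v) = MulAut.conj g • permStabilizer ρ v := by
  ext x
  simp [Subgroup.mem_pointwise_smul_iff_inv_smul_mem, mem_permStabilizer, Equiv.symm_apply_eq]

theorem suborbitCard_eq_relIndex (a b : V) :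
    suborbitCard ρ a b = (permStabilizer ρ b).relIndex (permStabilizer ρ a) := by
  set M := (permStabilizer ρ a).map ρ
  have orbit_eq : MulAction.orbit M b = (fun g : G => ρ g b) '' {g : G | ρ g a = a} := by
    ext w
    simp [M, MulAction.mem_orbit_iff, mem_permStabilizer, MulAction.subgroup_smul_def]
  have stabilizer_eq : (MulAction.stabilizer (Equiv.Perm V) b).subgroupOf M =
      MulAction.stabilizer M b := rfl
  rw [permStabilizer, Subgroup.relIndex_comap, Subgroup.relIndex, stabilizer_eq,
    MulAction.index_stabilizer, orbit_eq, suborbitCard]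

theorem suborbitCard_apply_eq_relIndex (g : G) (v : V) :
    suborbitCard ρ v (ρ g v) =
      (MulAut.conj g • permStabilizer ρ v).relIndex (permStabilizer ρ v) := by
  rw [suborbitCard_eq_relIndex, permStabilizer_apply]

theorem suborbitCard_apply_inv_eq_relIndex (g : G) (v : V) :
    suborbitCard ρ v (ρ g⁻¹ v) =
      (permStabilizer ρ v).relIndex (MulAut.conj g • permStabilizer ρ v) := by
  rw [suborbitCard_apply_eq_relIndex, ← Subgroup.relIndex_pointwise_smul (MulAut.conj g),
    map_inv, smul_inv_smul]

end PermStabilizer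

section ConnectedGraph

variable {G V : Type*} [Group G] {Γ : SimpleGraph V} {ρ : G →* Equiv.Perm V} {α : V}

theorem exists_mem_apply_eq_of_preconnected (hconn : Γ.Preconnected)
    (hadj : ∀ (g : G) (u v : V), Γ.Adj u v → Γ.Adj (ρ g u) (ρ g v)) {K : Subgroup G}
    (hK : ∀ v, Γ.Adj α v → ∃ k ∈ K, ρ k α = v) (v : V) : ∃ k ∈ K, ρ k α = v := by
  induction (SimpleGraph.reachable_iff_reflTransGen α v).1 (hconn α v) with
  | refl => exact ⟨1, one_mem K, by simp⟩
  | @tail _ w _ hvw ih =>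
    obtain ⟨k, hk, rfl⟩ := ih
    have adj_translate : Γ.Adj α (ρ k⁻¹ w) := by simpa using hadj k⁻¹ _ _ hvw
    obtain ⟨l, hl, hlw⟩ := hK _ adj_translate
    exact ⟨k * l, mul_mem hk hl, by simp [hlw]⟩

theorem eq_top_of_permStabilizer_le (hconn : Γ.Preconnected)
    (hadj : ∀ (g : G) (u v : V), Γ.Adj u v → Γ.Adj (ρ g u) (ρ g v)) {K : Subgroup G}
    (hstab : permStabilizer ρ α ≤ K) (hK : ∀ v, Γ.Adj α v → ∃ k ∈ K, ρ k α = v) : K = ⊤ := by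
  refine (Subgroup.eq_top_iff' K).2 fun x => ?_
  obtain ⟨k, hk, hkx⟩ := exists_mem_apply_eq_of_preconnected hconn hadj hK (ρ x α)
  have hmem : k⁻¹ * x ∈ K := hstab (by simp [mem_permStabilizer, ← hkx])
  simpa using mul_mem hk hmem

theorem range_eq_closure_range_of_permStabilizer_le_ker {A ι : Type*} [Group A]
    (hconn : Γ.Preconnected) (hadj : ∀ (g : G) (u v : V), Γ.Adj u v → Γ.Adj (ρ g u) (ρ g v))
    {f : G →* A} (hf : permStabilizer ρ α ≤ f.ker) {g : ι → G}
    (hg : ∀ v, Γ.Adj α v → ∃ i, ∃ u ∈ permStabilizer ρ α, ρ u (ρ (g i) α) = v) :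
    f.range = Subgroup.closure (Set.range fun i => f (g i)) := by
  set K := (Subgroup.closure (Set.range fun i => f (g i))).comap f
  have stab_le : permStabilizer ρ α ≤ K := hf.trans (f.ker_le_comap _)
  have g_mem (i : ι) : g i ∈ K := Subgroup.subset_closure ⟨i, rfl⟩
  have K_eq_top : K = ⊤ := eq_top_of_permStabilizer_le hconn hadj stab_le fun v hv => by
    obtain ⟨i, u, hu, huv⟩ := hg v hv
    exact ⟨u * g i, mul_mem (stab_le hu) (g_mem i), by simpa using huv⟩
  apply le_antisymm
  · rw [f.range_eq_map, Subgroup.map_le_iff_le_comap]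
    exact K_eq_top.ge
  · rw [Subgroup.closure_le]
    rintro _ ⟨i, rfl⟩
    exact ⟨g i, rfl⟩

end ConnectedGraph

section CompactOpenSubgroup

open scoped Pointwise

variable {G : Type*} [Group G] [TopologicalSpace G] [IsTopologicalGroup G] {H K : Subgroup G}

theorem isOpen_conj_smul (hH : IsOpen (H : Set G)) (g : G) :
    IsOpen ((MulAut.conj g • H : Subgroup G) : Set G) :=
  ((Homeomorph.mulLeft g).trans (Homeomorph.mulRight g⁻¹)).isOpenMap _ hH

theorem isCompact_conj_smul (hH : IsCompact (H : Set G)) (g : G) :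
    IsCompact ((MulAut.conj g • H : Subgroup G) : Set G) :=
  hH.image (f := fun x => g * x * g⁻¹) (by fun_prop)

theorem isFiniteRelIndex_of_isOpen_of_isCompact (hH : IsOpen (H : Set G))
    (hK : IsCompact (K : Set G)) : H.IsFiniteRelIndex K := by
  have : CompactSpace K := isCompact_iff_compactSpace.1 hK
  have : Finite (K ⧸ H.subgroupOf K) :=
    (H.subgroupOf K).quotient_finite_of_isOpen (hH.preimage continuous_subtype_val)
  exact ⟨Subgroup.index_ne_zero_of_finite⟩

theorem relIndex_mul_measure_inf [MeasurableSpace G] [BorelSpace G] (μ : Measure G)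
    [μ.IsMulRightInvariant] [H.IsFiniteRelIndex K] (hH : MeasurableSet (H : Set G))
    (hK : MeasurableSet (K : Set G)) : H.relIndex K * μ (H ⊓ K : Subgroup G) = μ K := by
  have embedding : MeasurableEmbedding K.subtype := .subtype_coe hK
  have : (μ.comap K.subtype).IsMulRightInvariant := .comap μ embedding
  have : (H.subgroupOf K).FiniteIndex := Subgroup.IsFiniteRelIndex.to_finiteIndex_subgroupOf
  have index_mul := (H.subgroupOf K).index_mul_measure (measurable_subtype_coe hH)
    (μ.comap K.subtype).inv
  have image_eq : K.subtype '' (H.subgroupOf K : Set K) = (H ⊓ K : Subgroup G) := by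
    simp [Subgroup.coe_subgroupOf, Set.image_preimage_eq_inter_range]
  have image_univ : K.subtype '' Set.univ = K := by simp
  rwa [Measure.inv_apply, Measure.inv_apply, inv_coe_set, Set.inv_univ, embedding.comap_apply,
    embedding.comap_apply, image_eq, image_univ] at index_mul

end CompactOpenSubgroup

section ModularFunction

open scoped Pointwise

variable {G : Type*} [Group G] [MeasurableSpace G]

/-- `Δ` is the modular function of `μ`, in the convention that it measures the effect of left
translations on the right-invariant measure `μ`. -/
def IsModularFunction (μ : Measure G) (Δ : G →* ℝ≥0ˣ) : Prop :=
  ∀ (g : G) (A : Set G), MeasurableSet A →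
    μ ((fun x => g * x) '' A) = ((Δ g : ℝ≥0) : ℝ≥0∞) * μ A

namespace IsModularFunction

variable {μ : Measure G} [μ.IsMulRightInvariant] {Δ : G →* ℝ≥0ˣ} {H : Subgroup G}

theorem measure_conj_smul [MeasurableMul G] (hΔ : IsModularFunction μ Δ) (g : G)
    (hH : MeasurableSet (H : Set G)) :
    μ (MulAut.conj g • H : Subgroup G) = ((Δ g : ℝ≥0) : ℝ≥0∞) * μ H := by
  have preimage_eq : (fun x => x * g⁻¹) ⁻¹' (MulAut.conj g • H : Subgroup G) =
      (fun x => g * x) '' H := by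
    ext x
    simp only [Set.mem_preimage, SetLike.mem_coe, Subgroup.mem_pointwise_smul_iff_inv_smul_mem]
    simp [mul_assoc]
  rw [← hΔ g H hH, ← preimage_eq, measure_preimage_mul_right]

variable [TopologicalSpace G] [IsTopologicalGroup G] [BorelSpace G] [IsFiniteMeasureOnCompacts μ]
  [μ.IsOpenPosMeasure]

theorem mul_relIndex_conj_smul (hΔ : IsModularFunction μ Δ) (hopen : IsOpen (H : Set G))
    (hcompact : IsCompact (H : Set G)) (g : G) :
    (Δ g : ℝ≥0) * (MulAut.conj g • H).relIndex H = H.relIndex (MulAut.conj g • H) := by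
  set L := MulAut.conj g • H
  have L_open : IsOpen (L : Set G) := isOpen_conj_smul hopen g
  have L_compact : IsCompact (L : Set G) := isCompact_conj_smul hcompact g
  have := isFiniteRelIndex_of_isOpen_of_isCompact L_open hcompact
  have := isFiniteRelIndex_of_isOpen_of_isCompact hopen L_compact
  have measure_inf_ne_zero : μ (L ⊓ H : Subgroup G) ≠ 0 :=
    ((L_open.inter hopen).measure_pos μ ⟨1, one_mem (L ⊓ H)⟩).ne'
  have measure_inf_ne_top : μ (L ⊓ H : Subgroup G) ≠ ∞ :=
    measure_ne_top_of_subset Set.inter_subset_right hcompact.measure_lt_top.ne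
  have measure_eq : ((Δ g : ℝ≥0) : ℝ≥0∞) * L.relIndex H * μ (L ⊓ H : Subgroup G) =
      H.relIndex L * μ (L ⊓ H : Subgroup G) := by
    rw [mul_assoc, relIndex_mul_measure_inf μ L_open.measurableSet hopen.measurableSet,
      ← hΔ.measure_conj_smul g hopen.measurableSet, inf_comm,
      relIndex_mul_measure_inf μ hopen.measurableSet L_open.measurableSet]
  exact_mod_cast (ENNReal.mul_left_inj measure_inf_ne_zero measure_inf_ne_top).1 measure_eq

theorem le_ker (hΔ : IsModularFunction μ Δ) (hopen : IsOpen (H : Set G))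
    (hcompact : IsCompact (H : Set G)) : H ≤ Δ.ker := by
  intro g hg
  have h := hΔ.mul_relIndex_conj_smul hopen hcompact g
  rw [Subgroup.conj_smul_eq_self_of_mem hg, Subgroup.relIndex_self, Nat.cast_one, mul_one] at h
  exact Units.ext h

theorem inv_eq_suborbitCard_div {V : Type*} {ρ : G →* Equiv.Perm V} {v : V}
    (hΔ : IsModularFunction μ Δ) (hopen : IsOpen (permStabilizer ρ v : Set G))
    (hcompact : IsCompact (permStabilizer ρ v : Set G)) (g : G) :
    (((Δ g)⁻¹ : ℝ≥0ˣ) : ℝ≥0) =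
      (suborbitCard ρ v (ρ g v) : ℝ≥0) / (suborbitCard ρ v (ρ g⁻¹ v) : ℝ≥0) := by
  have mul_suborbitCard : (Δ g : ℝ≥0) * suborbitCard ρ v (ρ g v) = suborbitCard ρ v (ρ g⁻¹ v) := by
    rw [suborbitCard_apply_eq_relIndex, suborbitCard_apply_inv_eq_relIndex]
    exact hΔ.mul_relIndex_conj_smul hopen hcompact g
  have suborbitCard_ne_zero : (suborbitCard ρ v (ρ g v) : ℝ≥0) ≠ 0 := by
    have := isFiniteRelIndex_of_isOpen_of_isCompact (isOpen_conj_smul hopen g) hcompact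
    rw [suborbitCard_apply_eq_relIndex]
    exact Nat.cast_ne_zero.2 Subgroup.relIndex_ne_zero
  rw [← mul_suborbitCard, Units.val_inv_eq_inv_val, div_mul_cancel_right₀ suborbitCard_ne_zero]

end IsModularFunction

end ModularFunction

theorem modular_image_generators_general {G V ι : Type*} [Finite ι] [Group G] [TopologicalSpace G]
    [IsTopologicalGroup G] [MeasurableSpace G] [BorelSpace G]
    (μ : Measure G) [IsFiniteMeasureOnCompacts μ] [μ.IsOpenPosMeasure] [μ.IsMulRightInvariant]
    (Δ : G →* ℝ≥0ˣ) (hΔ : IsModularFunction μ Δ)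
    (Γ : SimpleGraph V) (ρ : G →* Equiv.Perm V) (hCA : IsCayleyAbels Γ ρ) (α : V) (g : ι → G)
    (hg : ∀ v, Γ.Adj α v → ∃ i, ∃ u ∈ permStabilizer ρ α, ρ u (ρ (g i) α) = v) :
    Δ.range = Subgroup.closure {x : ℝ≥0ˣ | ∃ i : ι,
        (x : ℝ≥0) = (suborbitCard ρ α (ρ (g i) α) : ℝ≥0) /
          (suborbitCard ρ α (ρ (g i)⁻¹ α) : ℝ≥0)} ∧
      ∃ m : ℕ, Nonempty (Δ.range ≃* Multiplicative (Fin m → ℤ)) := by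
  obtain ⟨hconn, -, hadj, -, hstab⟩ := hCA
  obtain ⟨stab_compact, stab_open⟩ := hstab α
  have range_eq : Δ.range = Subgroup.closure (Set.range fun i => Δ (g i)) :=
    range_eq_closure_range_of_permStabilizer_le_ker hconn.preconnected hadj
      (hΔ.le_ker stab_open stab_compact) hg
  have quotients_eq : {x : ℝ≥0ˣ | ∃ i : ι, (x : ℝ≥0) = (suborbitCard ρ α (ρ (g i) α) : ℝ≥0) /
      (suborbitCard ρ α (ρ (g i)⁻¹ α) : ℝ≥0)} = (Set.range fun i => Δ (g i))⁻¹ := by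
    ext x
    refine exists_congr fun i => ?_
    rw [← hΔ.inv_eq_suborbitCard_div stab_open stab_compact, Units.val_inj, eq_comm,
      inv_eq_iff_eq_inv]
  have : Group.FG Δ.range := (Group.fg_iff_subgroup_fg _).2 <|
    (Subgroup.fg_iff _).2 ⟨_, range_eq.symm, Set.finite_range _⟩
  rw [quotients_eq, Subgroup.closure_inv]
  exact ⟨range_eq, exists_mulEquiv_multiplicative_fin_int Δ.range⟩

/-- Let `G` be a compactly generated t.d.l.c. group with modular function `Δ`, `Γ` a
Cayley–Abels graph for `G`, `α` a vertex, `B 1, …, B n` the orbits of the stabilizer `G_α`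
on the neighbours of `α`, and `g i ∈ G` with `α · g i ∈ B i`.  Then the image of `Δ` is
generated by the rationals `|(α·gᵢ)·G_α| / |(α·gᵢ⁻¹)·G_α|`, and it is a finitely generated
free abelian group. -/
theorem modular_image_generators {G V : Type*} [Group G] [TopologicalSpace G]
    [IsTopologicalGroup G] [T2Space G] [TotallyDisconnectedSpace G] [LocallyCompactSpace G]
    [MeasurableSpace G] [BorelSpace G]
    (hcg : ∃ S : Set G, IsCompact S ∧ Subgroup.closure S = ⊤)
    (μ : Measure G) [IsFiniteMeasureOnCompacts μ] [μ.IsOpenPosMeasure]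
    [μ.IsMulRightInvariant]
    (Δ : G →* ℝ≥0ˣ)
    (hΔ : ∀ (g : G) (A : Set G), MeasurableSet A →
      μ ((fun x => g * x) '' A) = ((Δ g : ℝ≥0) : ℝ≥0∞) * μ A)
    (Γ : SimpleGraph V) (ρ : G →* Equiv.Perm V) (hCA : IsCayleyAbels Γ ρ)
    (α : V) (n : ℕ) (B : Fin n → Set V)
    (hBsub : ∀ i, B i ⊆ Γ.neighborSet α)
    (hBne : ∀ i, (B i).Nonempty)
    (hBcover : ∀ v ∈ Γ.neighborSet α, ∃ i, v ∈ B i)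
    (hBorbit : ∀ i, ∀ b ∈ B i, B i = (fun g : G => ρ g b) '' {g : G | ρ g α = α})
    (hBdistinct : ∀ i j, B i = B j → i = j)
    (g : Fin n → G) (hg : ∀ i, ρ (g i) α ∈ B i) :
    Δ.range = Subgroup.closure {x : ℝ≥0ˣ | ∃ i : Fin n,
        (x : ℝ≥0) = (suborbitCard ρ α (ρ (g i) α) : ℝ≥0) /
          (suborbitCard ρ α (ρ (g i)⁻¹ α) : ℝ≥0)} ∧
      ∃ m : ℕ, Nonempty (Δ.range ≃* Multiplicative (Fin m → ℤ)) := by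
  exact modular_image_generators_general μ Δ hΔ Γ ρ hCA α g fun v hv =>
    (hBcover v hv).imp fun i hi => (hBorbit i _ (hg i)).le hi
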